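/- arXiv:2101.05229 — 8 statements merged into one kernel-verified Lean document; each statement's English description precedes it below -/
import Mathlib

section
/- Let $G$ be a weakly perfect graph (i.e., a graph whose clique number equals its chromatic number) with $m \geq 1$ edges, adjacency eigenvalues $\mu_1 \geq \mu_2 \geq \cdots \geq \mu_n$, clique number $\omega$, and $n^+$ positive adjacency eigenvalues. Then $\mu_1^2 + \mu_2^2 + \cdots + \mu_\ell^2 \leq \frac{2m(\omega - 1)}{\omega}$, where $\ell = \min(n^+, \omega)$. -/
/-!
Split the adjacency matrix as `A = A⁺ - A⁻`, with `A⁺`, `A⁻` positive semidefinite and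
`A⁺ * A⁻ = 0`. For a proper colouring with `r` colours, `A` vanishes on the blocks of pairs of equal
colour, so `A⁺` and `A⁻` agree there; let `d` be the sum of the squares of `A⁺` over these blocks,
and `x`, `y` the sums of the squares of all entries of `A⁺`, `A⁻`. Then `x + y = 2 * m`, and `x` is
the sum of the squares of the positive eigenvalues. By the Schur product theorem, pairing
`A⁺ ⊙ (A⁺)ᵀ` with the positive semidefinite matrix `r • [c u = c v] - 1` gives `x ≤ r * d`.
Since `A⁺` and `A⁻` are orthogonal and share the block part, Cauchy-Schwarz off the blocks gives
`d * (x + y) ≤ x * y`. Together, `r * x ≤ (r - 1) * (x + y)`.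
-/

open Finset Matrix RCLike
open scoped ComplexOrder MatrixOrder

section Orthogonal

variable {α 𝕜 : Type*} [RCLike 𝕜] [Fintype α]

-- The common part of `x` and `y` is no longer than the altitude of the right triangle with legs `x`
-- and `y`, whose square is `‖x‖² ‖y‖² / (‖x‖² + ‖y‖²)`.
theorem sum_norm_sq_filter_mul_add_le_mul {x y : α → 𝕜} (hxy : x ⬝ᵥ star y = 0)
    {p : α → Prop} [DecidablePred p] (hp : ∀ a, p a → x a = y a) :
    (∑ a with p a, ‖x a‖ ^ 2) * (∑ a, ‖x a‖ ^ 2 + ∑ a, ‖y a‖ ^ 2) ≤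
      (∑ a, ‖x a‖ ^ 2) * ∑ a, ‖y a‖ ^ 2 := by
  set d := ∑ a with p a, ‖x a‖ ^ 2 with hd
  have hx : d + ∑ a with ¬p a, ‖x a‖ ^ 2 = ∑ a, ‖x a‖ ^ 2 :=
    sum_filter_add_sum_filter_not univ p _
  have hy : d + ∑ a with ¬p a, ‖y a‖ ^ 2 = ∑ a, ‖y a‖ ^ 2 := by
    rw [← sum_filter_add_sum_filter_not univ p, hd]
    congr 1
    exact sum_congr rfl fun a ha ↦ by rw [hp a (mem_filter.1 ha).2]
  have hinner : (d : 𝕜) + ∑ a with ¬p a, x a * star (y a) = 0 := by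
    rw [← hxy, dotProduct, ← sum_filter_add_sum_filter_not univ p, hd, ofReal_sum]
    congr 1
    refine sum_congr rfl fun a ha ↦ ?_
    rw [Pi.star_apply, ← hp a (mem_filter.1 ha).2, star_def, mul_conj, ofReal_pow]
  have hd_le : d ≤ ∑ a with ¬p a, ‖x a‖ * ‖y a‖ :=
    calc
      d ≤ ‖(d : 𝕜)‖ := by rw [norm_ofReal]; exact le_abs_self d
      _ = ‖∑ a with ¬p a, x a * star (y a)‖ := by rw [eq_neg_of_add_eq_zero_left hinner, norm_neg]
      _ ≤ ∑ a with ¬p a, ‖x a‖ * ‖y a‖ :=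
        (norm_sum_le _ _).trans_eq (by simp only [norm_mul, norm_star])
  have hsq : d ^ 2 ≤ (∑ a with ¬p a, ‖x a‖ ^ 2) * ∑ a with ¬p a, ‖y a‖ ^ 2 :=
    (pow_le_pow_left₀ (by positivity) hd_le 2).trans (sum_mul_sq_le_sq_mul_sq _ _ _)
  rw [← hx, ← hy]
  linarith

end Orthogonal

section Pinching

variable {ι V 𝕜 : Type*} [RCLike 𝕜] [Fintype ι] [DecidableEq ι] [Fintype V]

theorem posSemidef_card_smul_one_sub_of_one :
    ((Fintype.card ι : 𝕜) • (1 : Matrix ι ι 𝕜) - of fun _ _ ↦ 1).PosSemidef := by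
  refine .of_dotProduct_mulVec_nonneg ?_ fun x ↦ ?_
  · ext i j
    simp [Matrix.one_apply, apply_ite, eq_comm]
  · have hmulVec : ((Fintype.card ι : 𝕜) • (1 : Matrix ι ι 𝕜) - of fun _ _ ↦ 1) *ᵥ x =
        fun i ↦ Fintype.card ι * x i - ∑ j, x j := by
      rw [sub_mulVec, smul_mulVec, one_mulVec]
      ext i
      simp [mulVec, dotProduct]
    have hquad : star x ⬝ᵥ ((Fintype.card ι : 𝕜) • (1 : Matrix ι ι 𝕜) - of fun _ _ ↦ 1) *ᵥ x =
        (Fintype.card ι * ∑ i, ‖x i‖ ^ 2 - ‖∑ i, x i‖ ^ 2 : ℝ) := by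
      rw [hmulVec]
      simp only [dotProduct, Pi.star_apply, mul_sub, sum_sub_distrib, ← sum_mul,
        mul_left_comm, ← mul_sum, star_def, ← map_sum, RCLike.conj_mul]
      push_cast
      rfl
    rw [hquad, ofReal_nonneg, sub_nonneg]
    calc
      ‖∑ i, x i‖ ^ 2 ≤ (∑ i, ‖x i‖) ^ 2 := by gcongr; exact norm_sum_le _ _
      _ ≤ Fintype.card ι * ∑ i, ‖x i‖ ^ 2 := sq_sum_le_card_mul_sum_sq

theorem sum_norm_sq_le_card_mul_sum_norm_sq_filter {X : Matrix V V 𝕜} (hX : X.PosSemidef)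
    (c : V → ι) :
    ∑ p : V × V, ‖X p.1 p.2‖ ^ 2 ≤
      Fintype.card ι * ∑ p : V × V with c p.1 = c p.2, ‖X p.1 p.2‖ ^ 2 := by
  set M := (X ⊙ Xᵀ) ⊙ ((Fintype.card ι : 𝕜) • (1 : Matrix ι ι 𝕜) - of fun _ _ ↦ 1).submatrix c c
  have hM : M.PosSemidef := (hX.hadamard hX.transpose).hadamard
    (posSemidef_card_smul_one_sub_of_one.submatrix c)
  have hM_apply (u v : V) :
      M u v = X u v * X v u * (Fintype.card ι * (1 : Matrix ι ι 𝕜) (c u) (c v) - 1) := rfl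
  have hentry (u v : V) : M u v =
      (Fintype.card ι * (if c u = c v then ‖X u v‖ ^ 2 else 0) - ‖X u v‖ ^ 2 : ℝ) := by
    have hmul : X u v * X v u = (‖X u v‖ ^ 2 : ℝ) := by
      rw [← hX.isHermitian.apply v u, star_def, RCLike.mul_conj, ofReal_pow]
    rw [hM_apply, hmul, Matrix.one_apply]
    split_ifs <;> push_cast <;> ring
  have hsum : star 1 ⬝ᵥ M *ᵥ 1 = (Fintype.card ι *
      ∑ p : V × V with c p.1 = c p.2, ‖X p.1 p.2‖ ^ 2 - ∑ p : V × V, ‖X p.1 p.2‖ ^ 2 : ℝ) := by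
    simp only [star_one, one_dotProduct, mulVec, dotProduct_one, hentry, ← ofReal_sum,
      sum_sub_distrib, ← mul_sum, sum_filter, Fintype.sum_prod_type]
  have hnonneg := hM.dotProduct_mulVec_nonneg 1
  rwa [hsum, ofReal_nonneg, sub_nonneg] at hnonneg

end Pinching

section Spectral

variable {n 𝕜 : Type*} [RCLike 𝕜] [Fintype n] {A X Y : Matrix n n 𝕜}

theorem sum_norm_sq_eq_trace_mul_self (hA : A.IsHermitian) :
    ((∑ p : n × n, ‖A p.1 p.2‖ ^ 2 : ℝ) : 𝕜) = (A * A).trace := by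
  nth_rw 3 [← hA.eq]
  simp only [trace, diag_apply, mul_apply, conjTranspose_apply, star_def, RCLike.mul_conj,
    Fintype.sum_prod_type, ofReal_sum, ofReal_pow]

theorem sum_norm_sq_sub_of_mul_eq_zero (hX : X.IsHermitian) (hY : Y.IsHermitian)
    (hXY : X * Y = 0) :
    ∑ p : n × n, ‖(X - Y) p.1 p.2‖ ^ 2 =
      ∑ p : n × n, ‖X p.1 p.2‖ ^ 2 + ∑ p : n × n, ‖Y p.1 p.2‖ ^ 2 := by
  have hYX : Y * X = 0 := by
    rw [← hX.eq, ← hY.eq, ← conjTranspose_mul, hXY, conjTranspose_zero]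
  apply ofReal_injective (K := 𝕜)
  rw [ofReal_add, sum_norm_sq_eq_trace_mul_self (hX.sub hY), sum_norm_sq_eq_trace_mul_self hX,
    sum_norm_sq_eq_trace_mul_self hY, ← trace_add, sub_mul, mul_sub, mul_sub, hXY, hYX, sub_zero,
    zero_sub, sub_neg_eq_add]

theorem card_mul_sum_norm_sq_le_of_mul_eq_zero {ι : Type*} [Fintype ι]
    (hX : X.PosSemidef) (hY : Y.IsHermitian) (hXY : X * Y = 0)
    (c : n → ι) (hc : ∀ u v, c u = c v → X u v = Y u v) :
    Fintype.card ι * ∑ p : n × n, ‖X p.1 p.2‖ ^ 2 ≤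
      (Fintype.card ι - 1 : ℝ) *
        (∑ p : n × n, ‖X p.1 p.2‖ ^ 2 + ∑ p : n × n, ‖Y p.1 p.2‖ ^ 2) := by
  classical
  obtain _ | ⟨⟨v⟩⟩ := isEmpty_or_nonempty n
  · simp
  have hr : (1 : ℝ) ≤ Fintype.card ι := by
    exact_mod_cast Fintype.card_pos_iff.2 ⟨c v⟩
  have horth : (fun p : n × n ↦ X p.1 p.2) ⬝ᵥ star (fun p ↦ Y p.1 p.2) = 0 :=
    calc
      _ = (X * Yᴴ).trace := by
        simp only [dotProduct, Fintype.sum_prod_type, Pi.star_apply, trace, diag_apply, mul_apply,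
          conjTranspose_apply]
      _ = 0 := by rw [hY.eq, hXY, trace_zero]
  have hpinch := sum_norm_sq_le_card_mul_sum_norm_sq_filter hX c
  have hblocks := sum_norm_sq_filter_mul_add_le_mul horth (p := fun p ↦ c p.1 = c p.2)
    fun p ↦ hc p.1 p.2
  set x := ∑ p : n × n, ‖X p.1 p.2‖ ^ 2
  set y := ∑ p : n × n, ‖Y p.1 p.2‖ ^ 2
  set d := ∑ p : n × n with c p.1 = c p.2, ‖X p.1 p.2‖ ^ 2
  have hx : 0 ≤ x := by positivity
  have hy : 0 ≤ y := by positivity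
  obtain hx_zero | hx_pos := hx.eq_or_lt
  · rw [← hx_zero, mul_zero, zero_add]
    exact mul_nonneg (sub_nonneg.2 hr) hy
  · have hmul : x * (x + y) ≤ x * (Fintype.card ι * y) :=
      calc
        x * (x + y) ≤ Fintype.card ι * d * (x + y) := by gcongr
        _ = Fintype.card ι * (d * (x + y)) := mul_assoc _ _ _
        _ ≤ Fintype.card ι * (x * y) := by gcongr
        _ = x * (Fintype.card ι * y) := mul_left_comm _ _ _
    linarith [le_of_mul_le_mul_left hmul hx_pos]

variable [DecidableEq n]

theorem trace_cfc (hA : A.IsHermitian) (f : ℝ → ℝ) :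
    (cfc f A).trace = ∑ i, (f (hA.eigenvalues i) : 𝕜) := by
  rw [hA.cfc_eq, IsHermitian.cfc, Unitary.conjStarAlgAut_apply, trace_mul_cycle,
    Unitary.coe_star_mul_self, one_mul, trace_diagonal]
  rfl

theorem sum_norm_sq_cfc (hA : A.IsHermitian) (f : ℝ → ℝ) :
    ∑ p : n × n, ‖cfc f A p.1 p.2‖ ^ 2 = ∑ i, f (hA.eigenvalues i) ^ 2 := by
  have hf : ContinuousOn f (spectrum ℝ A) := finite_real_spectrum.continuousOn f
  apply ofReal_injective (K := 𝕜)
  calc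
    _ = (cfc f A * cfc f A).trace := sum_norm_sq_eq_trace_mul_self (cfc_predicate f A)
    _ = (cfc (fun x ↦ f x * f x) A).trace := by rw [cfc_mul f f A]
    _ = _ := by simp only [trace_cfc hA, sq, ofReal_sum]

theorem sum_norm_sq_posPart (hA : A.IsHermitian) :
    ∑ p : n × n, ‖A⁺ p.1 p.2‖ ^ 2 =
      ∑ i with 0 < hA.eigenvalues i, hA.eigenvalues i ^ 2 := by
  rw [CFC.posPart_def, cfcₙ_eq_cfc, sum_norm_sq_cfc hA, sum_filter]
  refine sum_congr rfl fun i _ ↦ ?_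
  split_ifs with h
  · rw [posPart_of_nonneg h.le]
  · rw [posPart_of_nonpos (not_lt.1 h), zero_pow two_ne_zero]

theorem card_mul_sum_sq_pos_eigenvalues_le {ι : Type*} [Fintype ι]
    (hA : A.IsHermitian) (c : n → ι) (hc : ∀ u v, c u = c v → A u v = 0) :
    Fintype.card ι * ∑ i with 0 < hA.eigenvalues i, hA.eigenvalues i ^ 2 ≤
      (Fintype.card ι - 1 : ℝ) * ∑ p : n × n, ‖A p.1 p.2‖ ^ 2 := by
  have hpos : A⁺.PosSemidef := (CFC.posPart_nonneg A).posSemidef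
  have hneg : A⁻.IsHermitian := (CFC.negPart_nonneg A).posSemidef.isHermitian
  have hmul : A⁺ * A⁻ = 0 := CFC.posPart_mul_negPart A
  have hsub : A⁺ - A⁻ = A := CFC.posPart_sub_negPart A hA
  have hblock (u v : n) (huv : c u = c v) : A⁺ u v = A⁻ u v := by
    rw [← sub_eq_zero, ← Matrix.sub_apply, hsub, hc u v huv]
  have hle := card_mul_sum_norm_sq_le_of_mul_eq_zero hpos hneg hmul c hblock
  rwa [← sum_norm_sq_sub_of_mul_eq_zero hpos.isHermitian hneg hmul, hsub,
    sum_norm_sq_posPart hA] at hle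

end Spectral

section Graph

variable {V : Type*} (G : SimpleGraph V)

theorem cliqueNum_ne_zero [Finite V] [Nonempty V] : G.cliqueNum ≠ 0 := by
  obtain ⟨v⟩ := ‹Nonempty V›
  have h : G.IsClique ({v} : Finset V) := by simp
  exact (Nat.one_pos.trans_le h.card_le_cliqueNum).ne'

theorem sum_norm_sq_adjMatrix [Fintype V] [DecidableRel G.Adj] (𝕜 : Type*) [RCLike 𝕜] :
    ∑ p : V × V, ‖G.adjMatrix 𝕜 p.1 p.2‖ ^ 2 = 2 * #G.edgeFinset := by
  apply ofReal_injective (K := 𝕜)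
  rw [sum_norm_sq_eq_trace_mul_self (G.isHermitian_adjMatrix 𝕜)]
  simp only [trace, diag_apply, G.adjMatrix_mul_self_apply_self]
  exact_mod_cast G.sum_degrees_eq_twice_card_edges

end Graph

theorem lt_of_antitone_of_lt_card {α : Type*} [Preorder α] {n : ℕ} {μ : Fin n → α}
    (hμ : Antitone μ) {a : α} {i : Fin n} (hi : i < Nat.card {j // a < μ j}) : a < μ i := by
  classical
  by_contra hai
  have hsub : ({j | a < μ j} : Finset (Fin n)) ⊆ Iio i := fun j hj ↦
    mem_Iio.2 <| lt_of_not_ge fun hij ↦ hai <| (mem_filter.1 hj).2.trans_le (hμ hij)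
  refine hi.not_ge ?_
  rw [Nat.card_eq_fintype_card, Fintype.card_subtype, ← Fin.card_Iio]
  exact card_le_card hsub

theorem sum_sq_lt_min_card_pos_le_sum_sq_pos {V : Type*} [Fintype V] {n : ℕ} {μ : Fin n → ℝ}
    (hμ : Antitone μ) {l : V → ℝ} (e : V ≃ Fin n) (he : ∀ v, μ (e v) = l v) (k : ℕ) :
    ∑ i with Fin.val i < min (Nat.card {j // 0 < μ j}) k, μ i ^ 2 ≤
      ∑ v with 0 < l v, l v ^ 2 :=
  calc
    _ ≤ ∑ i with 0 < μ i, μ i ^ 2 :=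
      sum_le_sum_of_subset_of_nonneg
        (monotone_filter_right _ fun _ _ hi ↦ lt_of_antitone_of_lt_card hμ (lt_min_iff.1 hi).1)
        fun _ _ _ ↦ sq_nonneg _
    _ = ∑ v with 0 < l v, l v ^ 2 :=
      (sum_equiv e (by simp [he]) (by simp [he])).symm

theorem weakly_perfect_sum_sq_eigenvalues_le_general {V : Type*} [Fintype V] [DecidableEq V]
    (G : SimpleGraph V) [DecidableRel G.Adj] (hA : (G.adjMatrix ℝ).IsHermitian)
    {r : ℕ} (hr : r ≠ 0) (hG : G.Colorable r) :
    ∑ v with 0 < hA.eigenvalues v, hA.eigenvalues v ^ 2 ≤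
      2 * (#G.edgeFinset : ℝ) * ((r : ℝ) - 1) / (r : ℝ) := by
  obtain ⟨c⟩ := hG
  have hzero (u v : V) (huv : c u = c v) : G.adjMatrix ℝ u v = 0 := by
    rw [G.adjMatrix_apply, if_neg fun hadj ↦ c.valid hadj huv]
  have hle := card_mul_sum_sq_pos_eigenvalues_le hA c hzero
  rw [Fintype.card_fin, sum_norm_sq_adjMatrix] at hle
  rw [le_div_iff₀ (by positivity)]
  linarith

/-- **Generalised Bollobás–Nikiforov conjecture for weakly perfect graphs.**
If `G` is a weakly perfect graph (its clique number equals its chromatic number)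
with at least one edge, and `μ 0 ≥ μ 1 ≥ ⋯` is the nonincreasing enumeration of the
eigenvalues of its adjacency matrix, then
`μ 0 ^ 2 + ⋯ + μ (ℓ-1) ^ 2 ≤ 2 m (ω - 1) / ω`, where `ℓ = min(n⁺, ω)`,
`n⁺` is the number of positive eigenvalues, `ω` the clique number and `m` the
number of edges. -/
theorem weakly_perfect_sum_sq_eigenvalues_le
    {V : Type*} [Fintype V] [DecidableEq V]
    (G : SimpleGraph V) [DecidableRel G.Adj]
    (hA : (G.adjMatrix ℝ).IsHermitian)
    (μ : Fin (Fintype.card V) → ℝ) (hanti : Antitone μ)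
    (e : V ≃ Fin (Fintype.card V)) (heig : ∀ v : V, μ (e v) = hA.eigenvalues v)
    (hweak : (G.cliqueNum : ℕ∞) = G.chromaticNumber)
    (hm : 1 ≤ G.edgeFinset.card) :
    ∑ i ∈ Finset.univ.filter (fun i : Fin (Fintype.card V) =>
        (i : ℕ) < min (Nat.card {j : Fin (Fintype.card V) // 0 < μ j}) G.cliqueNum),
      μ i ^ 2
    ≤ 2 * (G.edgeFinset.card : ℝ) * ((G.cliqueNum : ℝ) - 1) / (G.cliqueNum : ℝ) := by
  have : Nonempty V := by
    obtain ⟨⟨u, _⟩, _⟩ := card_pos.1 hm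
    exact ⟨u⟩
  have hcol : G.Colorable G.cliqueNum := SimpleGraph.chromaticNumber_le_iff_colorable.1 hweak.ge
  exact (sum_sq_lt_min_card_pos_le_sum_sq_pos hanti e heig _).trans
    (weakly_perfect_sum_sq_eigenvalues_le_general G hA (cliqueNum_ne_zero G) hcol)
end

section
/- Let $G$ be a strongly regular graph with parameters $(n, d, \lambda, \mu)$, $0 < d < n - 1$, with $m$ edges, adjacency eigenvalues $\mu_1 \geq \mu_2 \geq \cdots \geq \mu_n$, $n^+$ positive adjacency eigenvalues, least adjacency eigenvalue $s = \mu_n$, and clique number $\omega$. If $\omega = 1 - d/s$, then $\mu_1^2 + \mu_2^2 + \cdots + \mu_\ell^2 \leq \frac{2m(\omega - 1)}{\omega}$, where $\ell = \min(n^+, \omega)$. -/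
/-!
Let `P` be the sum of the positive eigenvalues; as the trace vanishes, the negative ones sum
to `-P`. A strongly regular graph has a single negative eigenvalue `s`, so the squares of its
negative eigenvalues sum to exactly `-s * P`, while those of its positive eigenvalues, none of which
exceeds `d`, sum to at most `d * P`. As all the squares sum to `2 * m`, the positive ones account
for at most `2 * m * d / (d - s)`, which is `2 * m * (h - 1) / h` for the Hoffman clique bound
`h = 1 - d / s`.
-/

open Finset Matrix

theorem sub_mul_sum_sq_pos_le {ι R : Type*} [Fintype ι] [CommRing R] [LinearOrder R]
    [IsStrictOrderedRing R] {x : ι → R} {a s : R} (hsum : ∑ i, x i = 0) (hs : s ≤ 0)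
    (hle : ∀ i, x i ≤ a) (hneg : ∀ i, x i < 0 → x i = s) :
    (a - s) * ∑ i with 0 < x i, x i ^ 2 ≤ a * ∑ i, x i ^ 2 := by
  have hterm (i : ι) : (if 0 < x i then (a - s) * x i ^ 2 else 0) ≤ a * x i ^ 2 - s * a * x i := by
    rcases lt_trichotomy (x i) 0 with hi | hi | hi
    · rw [if_neg hi.not_gt, hneg i hi]
      exact (by ring : (0 : R) = a * s ^ 2 - s * a * s).le
    · simp [hi]
    · rw [if_pos hi]
      linarith [mul_nonneg (mul_nonneg (neg_nonneg.2 hs) hi.le) (sub_nonneg.2 (hle i))]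
  calc (a - s) * ∑ i with 0 < x i, x i ^ 2
      = ∑ i, if 0 < x i then (a - s) * x i ^ 2 else 0 := by rw [mul_sum, sum_filter]
    _ ≤ ∑ i, (a * x i ^ 2 - s * a * x i) := sum_le_sum fun i _ => hterm i
    _ = a * ∑ i, x i ^ 2 := by rw [sum_sub_distrib, ← mul_sum, ← mul_sum, hsum, mul_zero, sub_zero]

theorem one_sub_div_sub_one_div_one_sub_div {K : Type*} [Field K] {a s : K} (hs : s ≠ 0) :
    (1 - a / s - 1) / (1 - a / s) = a / (a - s) := by
  rw [sub_sub_cancel_left, one_sub_div hs, ← neg_div, div_div_div_cancel_right₀ hs,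
    ← neg_sub a s, neg_div_neg_eq]

theorem lt_apply_of_lt_card_of_antitone {α : Type*} [Preorder α] {N : ℕ} {f : Fin N → α}
    (hf : Antitone f) {c : α} {i : Fin N} (hi : (i : ℕ) < Nat.card {j : Fin N // c < f j}) :
    c < f i := by
  classical
  by_contra hci
  have hsub : ({j | c < f j} : Finset (Fin N)) ⊆ Iio i := fun j hj =>
    mem_Iio.2 <| lt_of_not_ge fun hij => hci <| (mem_filter.1 hj).2.trans_le (hf hij)
  have hcard := card_le_card hsub
  rw [Fin.card_Iio, ← Fintype.card_subtype, ← Nat.card_eq_fintype_card] at hcard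
  exact hi.not_ge hcard

theorem trace_pow_eq_sum_eigenvalues_pow {𝕜 n : Type*} [RCLike 𝕜] [Fintype n] [DecidableEq n]
    {A : Matrix n n 𝕜} (hA : A.IsHermitian) (k : ℕ) :
    (A ^ k).trace = ∑ i, (hA.eigenvalues i : 𝕜) ^ k := by
  conv_lhs => rw [hA.spectral_theorem, ← map_pow, Unitary.conjStarAlgAut_apply, trace_mul_comm,
    ← mul_assoc, Unitary.coe_star_mul_self, one_mul, diagonal_pow, trace_diagonal]
  rfl

section Graph

variable {V : Type*} [Fintype V] {G : SimpleGraph V} [DecidableRel G.Adj]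

section Spectrum

variable [DecidableEq V] (hA : (G.adjMatrix ℝ).IsHermitian)

theorem sum_eigenvalues_adjMatrix : ∑ v, hA.eigenvalues v = 0 := by
  simpa using hA.trace_eq_sum_eigenvalues.symm

theorem sum_sq_eigenvalues_adjMatrix : ∑ v, hA.eigenvalues v ^ 2 = 2 * (#G.edgeFinset : ℝ) := by
  have htrace : ((G.adjMatrix ℝ) ^ 2).trace = ∑ v, (G.degree v : ℝ) := by
    simp only [sq, trace, diag_apply, SimpleGraph.adjMatrix_mul_self_apply_self]
  have hpow := trace_pow_eq_sum_eigenvalues_pow hA 2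
  simp only [RCLike.ofReal_real_eq_id, id_eq] at hpow
  rw [← hpow, htrace]
  exact_mod_cast G.sum_degrees_eq_twice_card_edges

theorem eigenvalues_adjMatrix_le {d : ℕ} (hd : ∀ v, G.degree v ≤ d) (v : V) :
    hA.eigenvalues v ≤ d := by
  have hmem := hA.eigenvalues_mem_spectrum_real v
  rw [← Matrix.spectrum_toLin', ← Module.End.hasEigenvalue_iff_mem_spectrum] at hmem
  obtain ⟨w, hw⟩ := eigenvalue_mem_ball hmem
  have hrow : ∑ u ∈ univ.erase w, ‖G.adjMatrix ℝ w u‖ ≤ G.degree w :=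
    calc ∑ u ∈ univ.erase w, ‖G.adjMatrix ℝ w u‖
        ≤ ∑ u, ‖G.adjMatrix ℝ w u‖ :=
          sum_le_sum_of_subset_of_nonneg (erase_subset _ _) fun _ _ _ => norm_nonneg _
      _ = G.degree w := by
          simp [apply_ite, ← G.card_neighborFinset_eq_degree, G.neighborFinset_eq_filter]
  have hball : |hA.eigenvalues v| ≤ ∑ u ∈ univ.erase w, ‖G.adjMatrix ℝ w u‖ := by
    simpa using hw
  exact (le_abs_self _).trans <| hball.trans <| hrow.trans <| mod_cast hd w

theorem exists_eigenvalues_adjMatrix_neg (hG : G ≠ ⊥) : ∃ v, hA.eigenvalues v < 0 := by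
  by_contra! hnonneg
  have hzero := (sum_eq_zero_iff_of_nonneg fun v _ => hnonneg v).1 (sum_eigenvalues_adjMatrix hA)
  have hA0 := hA.eigenvalues_eq_zero_iff.1 (funext fun v => hzero v (mem_univ v))
  refine hG (SimpleGraph.ext ?_)
  ext v w
  simpa using congrFun₂ hA0 v w

theorem sub_mul_sum_sq_pos_eigenvalues_adjMatrix_le {d : ℕ} {s : ℝ} (hd : ∀ v, G.degree v ≤ d)
    (hs : s ≤ 0) (hneg : ∀ v, hA.eigenvalues v < 0 → hA.eigenvalues v = s) :
    (d - s) * ∑ v with 0 < hA.eigenvalues v, hA.eigenvalues v ^ 2 ≤ d * (2 * #G.edgeFinset) := by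
  rw [← sum_sq_eigenvalues_adjMatrix hA]
  exact sub_mul_sum_sq_pos_le (sum_eigenvalues_adjMatrix hA) hs
    (eigenvalues_adjMatrix_le hA hd) hneg

end Spectrum

section StronglyRegular

variable {n d lam mu : ℕ}

/- Any `mu` is allowed for a complete graph; capping it at `d` makes the product `mu - d` of the
roots of the quadratic factor below nonpositive. -/
theorem isSRGWith_min_degree (h : G.IsSRGWith n d lam mu) : G.IsSRGWith n d lam (min mu d) where
  __ := h
  of_not_adj v w hvw hadj := by
    have hcard := h.of_not_adj hvw hadj
    have hle := G.card_commonNeighbors_le_degree_left v w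
    rw [hcard, h.regular v] at hle
    rw [hcard, min_eq_left hle]

theorem adjMatrix_mul_of_one_of_isRegularOfDegree {R : Type*} [NonAssocSemiring R]
    (h : G.IsRegularOfDegree d) :
    G.adjMatrix R * of 1 = (d : R) • (of 1 : Matrix V V R) := by
  ext v w
  simp [h v]

variable [DecidableEq V]

theorem adjMatrix_sq_sub_of_isSRGWith {R : Type*} [CommRing R] (h : G.IsSRGWith n d lam mu) :
    G.adjMatrix R ^ 2 - ((lam : R) - mu) • G.adjMatrix R - ((d : R) - mu) • 1 =
      (mu : R) • (of 1 : Matrix V V R) := by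
  classical
  rw [h.matrix_eq, ← SimpleGraph.one_add_adjMatrix_add_compl_adjMatrix_eq_of_one R G,
    G.compl_adjMatrix_eq_adjMatrix_compl R]
  module

open Polynomial in
theorem eigenvalues_eq_degree_or_quadratic_eq_zero_of_isSRGWith (h : G.IsSRGWith n d lam mu)
    (hA : (G.adjMatrix ℝ).IsHermitian) (v : V) :
    hA.eigenvalues v = d ∨
      hA.eigenvalues v ^ 2 - ((lam : ℝ) - mu) * hA.eigenvalues v - ((d : ℝ) - mu) = 0 := by
  let p : ℝ[X] := (X - (d : ℝ) • 1) * (X ^ 2 - ((lam : ℝ) - mu) • X - ((d : ℝ) - mu) • 1)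
  have hp : aeval (G.adjMatrix ℝ) p = 0 := by
    simp only [p, map_mul, map_sub, map_pow, map_smul, map_one, aeval_X]
    rw [adjMatrix_sq_sub_of_isSRGWith h, sub_mul, mul_smul_comm,
      adjMatrix_mul_of_one_of_isRegularOfDegree h.regular, smul_mul_assoc, one_mul, smul_comm,
      sub_self]
  have hroot : p.eval (hA.eigenvalues v) ∈ spectrum ℝ (aeval (G.adjMatrix ℝ) p) :=
    spectrum.subset_polynomial_aeval _ _ ⟨_, hA.eigenvalues_mem_spectrum_real v, rfl⟩
  have : Nonempty V := ⟨v⟩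
  rw [hp, spectrum.zero_eq, Set.mem_singleton_iff] at hroot
  simpa [p, sub_eq_zero] using hroot

theorem neg_eigenvalues_unique_of_isSRGWith (h : G.IsSRGWith n d lam mu)
    (hA : (G.adjMatrix ℝ).IsHermitian) {v w : V} (hv : hA.eigenvalues v < 0)
    (hw : hA.eigenvalues w < 0) : hA.eigenvalues v = hA.eigenvalues w := by
  obtain ⟨mu', hmu, h'⟩ : ∃ mu' ≤ d, G.IsSRGWith n d lam mu' :=
    ⟨_, min_le_right mu d, isSRGWith_min_degree h⟩
  have hroot {u : V} (hu : hA.eigenvalues u < 0) :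
      hA.eigenvalues u ^ 2 - ((lam : ℝ) - mu') * hA.eigenvalues u - ((d : ℝ) - mu') = 0 :=
    (eigenvalues_eq_degree_or_quadratic_eq_zero_of_isSRGWith h' hA u).resolve_left
      (hu.trans_le d.cast_nonneg).ne
  by_contra hne
  have hsum : hA.eigenvalues v + hA.eigenvalues w = (lam : ℝ) - mu' :=
    mul_left_cancel₀ (sub_ne_zero.2 hne) (by linear_combination hroot hv - hroot hw)
  have hprod : hA.eigenvalues v * hA.eigenvalues w = (mu' : ℝ) - d := by
    linear_combination hA.eigenvalues v * hsum - hroot hv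
  have hmu_real : (mu' : ℝ) ≤ d := mod_cast hmu
  linarith [mul_pos_of_neg_of_neg hv hw]

end StronglyRegular

end Graph

theorem srg_typeC_sum_sq_eigenvalues_le_general
    {V ι : Type*} [Fintype V] [DecidableEq V] [Fintype ι]
    (G : SimpleGraph V) [DecidableRel G.Adj]
    (n d lam mu : ℕ) (hsrg : G.IsSRGWith n d lam mu) (hd0 : 0 < d)
    (hA : (G.adjMatrix ℝ).IsHermitian)
    (μ : ι → ℝ) (e : V ≃ ι) (heig : ∀ v : V, μ (e v) = hA.eigenvalues v)
    (s : ℝ) (hs : IsLeast (Set.range μ) s) :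
    ∑ i with 0 < μ i, μ i ^ 2
      ≤ 2 * (G.edgeFinset.card : ℝ) * ((1 - (d : ℝ) / s) - 1) / (1 - (d : ℝ) / s) := by
  obtain rfl : μ = hA.eigenvalues ∘ e.symm := funext fun i => by simp [← heig]
  obtain ⟨⟨i, hi⟩, hmin⟩ := hs
  have hle (v : V) : s ≤ hA.eigenvalues v := hmin ⟨e v, by simp⟩
  have hG : G ≠ ⊥ := by
    rintro rfl
    exact hd0.ne (by simpa using hsrg.regular (e.symm i))
  have hs0 : s < 0 :=
    have ⟨v, hv⟩ := exists_eigenvalues_adjMatrix_neg hA hG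
    (hle v).trans_lt hv
  have hneg (v : V) (hv : hA.eigenvalues v < 0) : hA.eigenvalues v = s :=
    (neg_eigenvalues_unique_of_isSRGWith hsrg hA hv (hi.trans_lt hs0)).trans hi
  have hsum := sub_mul_sum_sq_pos_eigenvalues_adjMatrix_le hA (fun v => (hsrg.regular v).le)
    hs0.le hneg
  have hds : (0 : ℝ) < d - s := sub_pos.2 (hs0.trans_le d.cast_nonneg)
  calc ∑ i with 0 < (hA.eigenvalues ∘ e.symm) i, (hA.eigenvalues ∘ e.symm) i ^ 2
      = ∑ v with 0 < hA.eigenvalues v, hA.eigenvalues v ^ 2 := by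
        simp only [sum_filter, ← e.sum_comp, Function.comp_apply, e.symm_apply_apply]
    _ ≤ 2 * (#G.edgeFinset : ℝ) * d / (d - s) := by
        rw [le_div_iff₀ hds]
        linarith
    _ = 2 * (#G.edgeFinset : ℝ) * ((1 - d / s) - 1) / (1 - d / s) := by
        rw [mul_div_assoc, mul_div_assoc, one_sub_div_sub_one_div_one_sub_div hs0.ne]

/-- **Generalised Bollobás–Nikiforov conjecture for Type C strongly regular graphs.**
Let `G` be a strongly regular graph with parameters `(n, d, lam, mu)`, `0 < d < n - 1`,
with nonincreasing adjacency eigenvalues `μ 0 ≥ μ 1 ≥ ⋯` and least eigenvalue `s`.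
If the clique number satisfies `ω = 1 - d / s`, then
`μ 0 ^ 2 + ⋯ + μ (ℓ-1) ^ 2 ≤ 2 m (ω - 1) / ω`, where `ℓ = min(n⁺, ω)`,
`n⁺` is the number of positive eigenvalues and `m` the number of edges. -/
theorem srg_typeC_sum_sq_eigenvalues_le
    {V : Type*} [Fintype V] [DecidableEq V]
    (G : SimpleGraph V) [DecidableRel G.Adj]
    (n d lam mu : ℕ) (hsrg : G.IsSRGWith n d lam mu)
    (hd0 : 0 < d) (hdn : d < n - 1)
    (hA : (G.adjMatrix ℝ).IsHermitian)
    (μ : Fin (Fintype.card V) → ℝ) (hanti : Antitone μ)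
    (e : V ≃ Fin (Fintype.card V)) (heig : ∀ v : V, μ (e v) = hA.eigenvalues v)
    (s : ℝ) (hs : IsLeast (Set.range μ) s)
    (homega : (G.cliqueNum : ℝ) = 1 - (d : ℝ) / s) :
    ∑ i ∈ Finset.univ.filter (fun i : Fin (Fintype.card V) =>
        (i : ℕ) < min (Nat.card {j : Fin (Fintype.card V) // 0 < μ j}) G.cliqueNum),
      μ i ^ 2
    ≤ 2 * (G.edgeFinset.card : ℝ) * ((G.cliqueNum : ℝ) - 1) / (G.cliqueNum : ℝ) := by
  rw [homega]
  exact (sum_le_sum_of_subset_of_nonneg (monotone_filter_right _ fun _ _ hi =>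
      lt_apply_of_lt_card_of_antitone hanti (lt_min_iff.1 hi).1) fun i _ _ => sq_nonneg (μ i)).trans
    (srg_typeC_sum_sq_eigenvalues_le_general G n d lam mu hsrg hd0 hA μ e heig s hs)
end

section
/- Let $G$ be a strongly regular graph with parameters $(n, d, 1, \mu)$ with $0 < d < n-1$ and $\mu \geq 1$, with $m$ edges, adjacency eigenvalues $\mu_1 \geq \mu_2 \geq \cdots \geq \mu_n$, $n^+$ positive adjacency eigenvalues, and clique number $\omega$. Then $\mu_1^2 + \mu_2^2 + \cdots + \mu_\ell^2 \leq \frac{2m(\omega - 1)}{\omega}$, where $\ell = \min(n^+, \omega)$. -/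
/-!
An SRG satisfies `A² = d I + λ A + μ (J - I - A)`. Pairing this with a unit eigenvector of
eigenvalue `x` gives `x² = (d - μ) + (λ - μ) x + μ n s`, where `s` is the weight of the eigenvector
along the all-ones vector. By regularity `s ≠ 0` forces `x = d`, and then the parameter equation,
with `μ > 0`, forces `s = 1`. Hence for `λ ≤ μ` every nonnegative eigenvalue satisfies
`x² ≤ (d - μ) + s (d² - (d - μ))`, and since the weights of an orthonormal family sum to at
most `1` (Bessel), at most `k + 1` such squares add up to at most `d² + k (d - μ)`.
When `λ = 1` the clique number is `3`, so `k = 2`, and what remains is a polynomial inequality in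
`d` and `μ` after eliminating `n`.
-/

open Finset Matrix

section RegularGraph

variable {V : Type*} [Fintype V] {G : SimpleGraph V} [DecidableRel G.Adj] {d : ℕ}

lemma eigenvalue_mul_sum_of_isRegularOfDegree {R : Type*} [CommSemiring R]
    (hG : G.IsRegularOfDegree d) {x : R} {v : V → R} (hv : G.adjMatrix R *ᵥ v = x • v) :
    x * ∑ w, v w = d * ∑ w, v w := by
  have hones : (1 : V → R) ᵥ* G.adjMatrix R = (d : R) • 1 := by
    ext u
    simp [hG.degree_eq u]
  have hpair := Matrix.dotProduct_mulVec 1 (G.adjMatrix R) v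
  simpa only [hv, hones, dotProduct_smul, smul_dotProduct, one_dotProduct, smul_eq_mul] using hpair

lemma two_mul_card_edgeFinset_of_isRegularOfDegree (hG : G.IsRegularOfDegree d) :
    2 * #G.edgeFinset = Fintype.card V * d := by
  simp [← G.sum_degrees_eq_twice_card_edges, hG.degree_eq]

end RegularGraph

section CliqueNumber

variable {V : Type*} {G : SimpleGraph V}

lemma cliqueNum_le_of_card_commonNeighbors_le [Fintype V] [DecidableRel G.Adj] {k : ℕ}
    (hk : ∀ v w, G.Adj v w → Fintype.card (G.commonNeighbors v w) ≤ k) : G.cliqueNum ≤ k + 2 := by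
  classical
  obtain ⟨s, hs⟩ := G.exists_isNClique_cliqueNum
  by_contra! hlt
  obtain ⟨a, ha, b, hb, hab⟩ := one_lt_card.mp (show 1 < #s by rw [hs.card_eq]; lia)
  have hsub : (s.erase a).erase b ⊆ (G.commonNeighbors a b).toFinset := by
    intro c hc
    obtain ⟨hcb, hca, hcs⟩ : c ≠ b ∧ c ≠ a ∧ c ∈ s := by simpa using hc
    simpa [SimpleGraph.mem_commonNeighbors] using
      And.intro (hs.isClique ha hcs hca.symm) (hs.isClique hb hcs hcb.symm)
  have hcard := (card_le_card hsub).trans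
    ((Set.toFinset_card _).trans_le (hk a b (hs.isClique ha hb hab)))
  rw [card_erase_of_mem (mem_erase.mpr ⟨hab.symm, hb⟩), card_erase_of_mem ha, hs.card_eq] at hcard
  lia

lemma three_le_cliqueNum_of_adj [Finite V] {u v w : V} (huv : G.Adj u v) (huw : G.Adj u w)
    (hvw : G.Adj v w) : 3 ≤ G.cliqueNum := by
  classical
  have htriangle : G.IsNClique 3 {u, v, w} :=
    SimpleGraph.is3Clique_triple_iff.mpr ⟨huv, huw, hvw⟩
  exact htriangle.card_eq ▸ htriangle.isClique.card_le_cliqueNum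

end CliqueNumber

section OnesWeight

variable {V : Type*} [Fintype V]

/-- The squared length of the orthogonal projection of `v` onto the line spanned by the all-ones
vector; for a unit vector it lies in `[0, 1]`. On an empty index type it is `0`. -/
noncomputable def onesWeight (v : V → ℝ) : ℝ := (∑ w, v w) ^ 2 / Fintype.card V

lemma card_mul_onesWeight (v : V → ℝ) : Fintype.card V * onesWeight v = (∑ w, v w) ^ 2 := by
  cases isEmpty_or_nonempty V
  · simp
  · exact mul_div_cancel₀ _ (by simp)

lemma onesWeight_ne_zero_iff {v : V → ℝ} : onesWeight v ≠ 0 ↔ ∑ w, v w ≠ 0 := by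
  cases isEmpty_or_nonempty V <;> simp [onesWeight]

lemma sum_onesWeight_le_one_of_orthonormal {ι : Type*} {b : ι → EuclideanSpace ℝ V}
    (hb : Orthonormal ℝ b) (T : Finset ι) : ∑ i ∈ T, onesWeight (b i) ≤ 1 := by
  have hbessel := hb.sum_inner_products_le (WithLp.toLp 2 (1 : V → ℝ)) (s := T)
  have hnorm : ‖WithLp.toLp 2 (1 : V → ℝ)‖ ^ 2 = Fintype.card V := by
    simp [EuclideanSpace.norm_sq_eq]
  have hinner (i : ι) :
      ‖inner ℝ (b i) (WithLp.toLp 2 (1 : V → ℝ))‖ ^ 2 = (∑ w, b i w) ^ 2 := by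
    simp [PiLp.inner_apply]
  simp only [hnorm, hinner] at hbessel
  simpa only [onesWeight, ← sum_div] using div_le_one_of_le₀ hbessel (Nat.cast_nonneg _)

end OnesWeight

section StronglyRegular

variable {V : Type*} [Fintype V] {G : SimpleGraph V} [DecidableRel G.Adj] {n d ℓ mu : ℕ}

lemma adjMatrix_mulVec_adjMatrix_mulVec_of_isSRGWith {R : Type*} [CommRing R]
    (hG : G.IsSRGWith n d ℓ mu) (v : V → R) :
    G.adjMatrix R *ᵥ (G.adjMatrix R *ᵥ v) =
      (d - mu : R) • v + (ℓ - mu : R) • (G.adjMatrix R *ᵥ v) + (mu * ∑ w, v w) • 1 := by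
  classical
  have hcompl : Gᶜ.adjMatrix R = Matrix.of 1 - 1 - G.adjMatrix R := by
    ext a b
    obtain rfl | hab := eq_or_ne a b
    · simp
    · by_cases hadj : G.Adj a b <;> simp [hab, hadj]
  have hones : (Matrix.of 1 : Matrix V V R) *ᵥ v = (∑ w, v w) • 1 := by
    ext u
    simp [mulVec, dotProduct]
  rw [mulVec_mulVec, ← pow_two, hG.matrix_eq, hcompl]
  simp only [add_mulVec, sub_mulVec, smul_mulVec, one_mulVec, hones]
  ext u
  simp only [nsmul_eq_mul, Pi.add_apply, Pi.mul_apply, Pi.natCast_apply, Pi.sub_apply,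
    Pi.smul_apply, Pi.one_apply, smul_eq_mul, mul_one]
  ring

lemma sq_mul_dotProduct_self_of_isSRGWith {R : Type*} [CommRing R] (hG : G.IsSRGWith n d ℓ mu)
    {x : R} {v : V → R} (hv : G.adjMatrix R *ᵥ v = x • v) :
    x ^ 2 * (v ⬝ᵥ v) = ((d - mu) + (ℓ - mu) * x) * (v ⬝ᵥ v) + mu * (∑ w, v w) ^ 2 := by
  have hpair := congrArg (v ⬝ᵥ ·) (adjMatrix_mulVec_adjMatrix_mulVec_of_isSRGWith hG v)
  simp only [hv, mulVec_smul, dotProduct_add, dotProduct_smul, dotProduct_one, smul_eq_mul] at hpair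
  linear_combination hpair

/-- `SimpleGraph.IsSRGWith.param_eq`, rearranged so that no subtraction truncates. -/
lemma sq_degree_eq_of_isSRGWith {R : Type*} [CommRing R] [IsDomain R] [CharZero R] [Nonempty V]
    (hG : G.IsSRGWith n d ℓ mu) : (d : R) ^ 2 = (d - mu) + (ℓ - mu) * d + mu * n := by
  have hones : G.adjMatrix R *ᵥ 1 = (d : R) • 1 := by
    ext u
    simp [hG.regular.degree_eq u]
  have hn : (n : R) ≠ 0 := by simp [← hG.card]
  have hpair := sq_mul_dotProduct_self_of_isSRGWith hG hones
  simp only [one_dotProduct, Pi.one_apply, sum_const, card_univ, hG.card, nsmul_eq_mul,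
    mul_one] at hpair
  exact mul_right_cancel₀ hn (by linear_combination hpair)

lemma le_degree_of_isSRGWith (hG : G.IsSRGWith n d ℓ mu) (hdn : d < n - 1) : mu ≤ d := by
  obtain ⟨v⟩ : Nonempty V := Fintype.card_pos_iff.mp (by rw [hG.card]; lia)
  have hdeg : G.degree v < Fintype.card V - 1 := by rwa [hG.regular.degree_eq, hG.card]
  obtain ⟨w, hvw, hadj⟩ : ∃ w, v ≠ w ∧ ¬ G.Adj v w := by
    simpa [SimpleGraph.IsUniversal] using (G.degree_lt_card_sub_one v).mp hdeg
  rw [← hG.of_not_adj hvw hadj, ← hG.regular v]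
  exact G.card_commonNeighbors_le_degree_left v w

lemma add_one_lt_degree_of_isSRGWith (hG : G.IsSRGWith n d ℓ mu) (hdn : d < n - 1) (hmu : 0 < mu) :
    ℓ + 1 < d := by
  have hparam := SimpleGraph.IsSRGWith.param_eq G hG (by lia)
  have hpos : 0 < d * (d - ℓ - 1) := hparam ▸ Nat.mul_pos (by lia) hmu
  have := Nat.pos_of_mul_pos_left hpos
  lia

lemma cliqueNum_eq_three_of_isSRGWith [Nonempty V] (hG : G.IsSRGWith n d 1 mu) (hd : 0 < d) :
    G.cliqueNum = 3 := by
  refine le_antisymm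
    (cliqueNum_le_of_card_commonNeighbors_le fun v w hvw => (hG.of_adj v w hvw).le) ?_
  obtain ⟨v⟩ := ‹Nonempty V›
  obtain ⟨w, hvw⟩ := (G.degree_pos_iff_exists_adj v).mp (hG.regular v ▸ hd)
  obtain ⟨⟨z, hvz, hwz⟩⟩ := Fintype.card_pos_iff.mp (hG.of_adj v w hvw ▸ one_pos)
  exact three_le_cliqueNum_of_adj hvw hvz hwz

lemma sq_eigenvalue_eq_of_isSRGWith (hG : G.IsSRGWith n d ℓ mu) {v : EuclideanSpace ℝ V}
    (hnorm : ‖v‖ = 1) {x : ℝ} (hv : G.adjMatrix ℝ *ᵥ v = x • ⇑v) :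
    x ^ 2 = (d - mu) + (ℓ - mu) * x + mu * n * onesWeight v := by
  have hunit : (v : V → ℝ) ⬝ᵥ v = 1 := by
    simpa [hnorm, dotProduct, pow_two] using (EuclideanSpace.real_norm_sq_eq v).symm
  have hquad := sq_mul_dotProduct_self_of_isSRGWith hG hv
  rw [hunit, ← card_mul_onesWeight, hG.card] at hquad
  linear_combination hquad

lemma eigenvalue_eq_degree_of_onesWeight_ne_zero (hG : G.IsRegularOfDegree d) {v : V → ℝ} {x : ℝ}
    (hv : G.adjMatrix ℝ *ᵥ v = x • v) (hs : onesWeight v ≠ 0) : x = d :=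
  mul_right_cancel₀ (onesWeight_ne_zero_iff.mp hs) (eigenvalue_mul_sum_of_isRegularOfDegree hG hv)

lemma onesWeight_eq_one_of_isSRGWith (hG : G.IsSRGWith n d ℓ mu) (hmu : 0 < mu)
    {v : EuclideanSpace ℝ V} (hnorm : ‖v‖ = 1) {x : ℝ} (hv : G.adjMatrix ℝ *ᵥ v = x • ⇑v)
    (hs : onesWeight v ≠ 0) : onesWeight v = 1 := by
  have hV : Nonempty V := by
    by_contra hV
    simp [onesWeight, not_nonempty_iff.mp hV] at hs
  have hmun : (mu * n : ℝ) ≠ 0 := by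
    rw [← hG.card]
    exact mul_ne_zero (by exact_mod_cast hmu.ne') (by simp)
  have hquad := sq_eigenvalue_eq_of_isSRGWith hG hnorm hv
  rw [eigenvalue_eq_degree_of_onesWeight_ne_zero hG.regular hv hs] at hquad
  exact mul_left_cancel₀ hmun (by linear_combination sq_degree_eq_of_isSRGWith (R := ℝ) hG - hquad)

lemma sq_eigenvalue_le_of_isSRGWith (hG : G.IsSRGWith n d ℓ mu) (hmu : 0 < mu) (hℓmu : ℓ ≤ mu)
    {v : EuclideanSpace ℝ V} (hnorm : ‖v‖ = 1) {x : ℝ} (hx : 0 ≤ x)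
    (hv : G.adjMatrix ℝ *ᵥ v = x • ⇑v) :
    x ^ 2 ≤ (d - mu) + onesWeight v * (d ^ 2 - (d - mu)) := by
  obtain hs | hs := eq_or_ne (onesWeight v) 0
  · have hquad := sq_eigenvalue_eq_of_isSRGWith hG hnorm hv
    have hlin : (ℓ - mu : ℝ) * x ≤ 0 :=
      mul_nonpos_of_nonpos_of_nonneg (sub_nonpos.mpr (by exact_mod_cast hℓmu)) hx
    rw [hs] at hquad ⊢
    linarith
  · rw [onesWeight_eq_one_of_isSRGWith hG hmu hnorm hv hs,
      eigenvalue_eq_degree_of_onesWeight_ne_zero hG.regular hv hs]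
    linarith

lemma sum_sq_eigenvalues_le_of_isSRGWith (hG : G.IsSRGWith n d ℓ mu) (hmu : 0 < mu) (hℓmu : ℓ ≤ mu)
    (hmud : mu ≤ d) {ι : Type*} {b : ι → EuclideanSpace ℝ V} (hb : Orthonormal ℝ b) {x : ι → ℝ}
    (hbx : ∀ i, G.adjMatrix ℝ *ᵥ b i = x i • ⇑(b i)) {T : Finset ι} (hx : ∀ i ∈ T, 0 ≤ x i)
    {k : ℕ} (hT : #T ≤ k + 1) :
    ∑ i ∈ T, x i ^ 2 ≤ d ^ 2 + k * (d - mu) := by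
  have hmud' : (0 : ℝ) ≤ d - mu := sub_nonneg.mpr (by exact_mod_cast hmud)
  have hdmu : (0 : ℝ) ≤ d ^ 2 - (d - mu) := by
    have : (d : ℝ) ≤ d ^ 2 := by exact_mod_cast Nat.le_self_pow two_ne_zero d
    have : (0 : ℝ) ≤ mu := mu.cast_nonneg
    linarith
  have hT' : (#T : ℝ) ≤ k + 1 := by exact_mod_cast hT
  calc ∑ i ∈ T, x i ^ 2
      ≤ ∑ i ∈ T, ((d - mu) + onesWeight (b i) * (d ^ 2 - (d - mu))) :=
        sum_le_sum fun i hi => sq_eigenvalue_le_of_isSRGWith hG hmu hℓmu (hb.1 i) (hx i hi) (hbx i)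
    _ = #T * (d - mu) + (∑ i ∈ T, onesWeight (b i)) * (d ^ 2 - (d - mu)) := by
        rw [sum_add_distrib, sum_const, nsmul_eq_mul, sum_mul]
    _ ≤ (k + 1) * (d - mu) + 1 * (d ^ 2 - (d - mu)) := by
        gcongr
        exact sum_onesWeight_le_one_of_orthonormal hb T
    _ = d ^ 2 + k * (d - mu) := by ring

end StronglyRegular

section Parameters

lemma degree_polynomial_nonneg {d mu : ℕ} (hd : 3 ≤ d) (hmud : mu ≤ d) :
    (0 : ℤ) ≤ 2 * d ^ 2 * (d - 2) - d ^ 2 * mu - 4 * d * mu + 6 * mu ^ 2 := by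
  obtain rfl | hd := hd.eq_or_lt
  · -- The quadratic `3 (2 mu - 3) (mu - 2)` is negative on `(3 / 2, 2)`, so integrality is needed.
    interval_cases mu <;> norm_num
  · have hd' : (0 : ℤ) ≤ d - 4 := by lia
    have hmu' : (0 : ℤ) ≤ 2 * d - mu := by lia
    calc (0 : ℤ) ≤ 2 * mu ^ 2 + 4 * (d - mu) ^ 2 + d * (d - 4) * (2 * d - mu) := by positivity
      _ = _ := by ring

lemma three_mul_sq_degree_add_le_of_isSRGWith {V : Type*} [Fintype V] [Nonempty V]
    {G : SimpleGraph V} [DecidableRel G.Adj] {n d mu : ℕ} (hG : G.IsSRGWith n d 1 mu) (hmu : 0 < mu)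
    (hd : 3 ≤ d) (hmud : mu ≤ d) :
    3 * ((d : ℝ) ^ 2 + 2 * (d - mu)) ≤ 2 * (n * d) := by
  have hparam : (mu * n : ℝ) = d * (d - 2) + (d + 1) * mu := by
    have := sq_degree_eq_of_isSRGWith (R := ℝ) hG
    push_cast at this
    linear_combination -this
  have hpoly : (0 : ℝ) ≤ 2 * d ^ 2 * (d - 2) - d ^ 2 * mu - 4 * d * mu + 6 * mu ^ 2 := by
    exact_mod_cast degree_polynomial_nonneg hd hmud
  refine le_of_mul_le_mul_left ?_ (show (0 : ℝ) < mu by exact_mod_cast hmu)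
  linear_combination hpoly - 2 * d * hparam

end Parameters

lemma lt_apply_of_antitone_of_lt_card {N : ℕ} {α : Type*} [LinearOrder α] {f : Fin N → α}
    (hf : Antitone f) {c : α} {i : Fin N} (hi : (i : ℕ) < Nat.card {j // c < f j}) : c < f i := by
  by_contra! hfi
  have hsub : ({j | c < f j} : Finset (Fin N)) ⊆ Iio i := fun j hj => by
    simpa using hf.reflect_lt (hfi.trans_lt (by simpa using hj))
  have hcard := card_le_card hsub
  rw [Fin.card_Iio, ← Fintype.card_subtype, ← Nat.card_eq_fintype_card] at hcard
  lia

/-- **Generalised Bollobás–Nikiforov conjecture for strongly regular graphs with `λ = 1`.**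
Let `G` be a strongly regular graph with parameters `(n, d, 1, mu)`, `0 < d < n - 1`,
`mu ≥ 1`, with nonincreasing adjacency eigenvalues `μ 0 ≥ μ 1 ≥ ⋯`. Then
`μ 0 ^ 2 + ⋯ + μ (ℓ-1) ^ 2 ≤ 2 m (ω - 1) / ω`, where `ℓ = min(n⁺, ω)`,
`n⁺` is the number of positive eigenvalues, `ω` the clique number and `m` the
number of edges. -/
theorem srg_lambda_one_sum_sq_eigenvalues_le
    {V : Type*} [Fintype V] [DecidableEq V]
    (G : SimpleGraph V) [DecidableRel G.Adj]
    (n d mu : ℕ) (hsrg : G.IsSRGWith n d 1 mu)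
    (hd0 : 0 < d) (hdn : d < n - 1) (hmu : 1 ≤ mu)
    (hA : (G.adjMatrix ℝ).IsHermitian)
    (μ : Fin (Fintype.card V) → ℝ) (hanti : Antitone μ)
    (e : V ≃ Fin (Fintype.card V)) (heig : ∀ v : V, μ (e v) = hA.eigenvalues v) :
    ∑ i ∈ Finset.univ.filter (fun i : Fin (Fintype.card V) =>
        (i : ℕ) < min (Nat.card {j : Fin (Fintype.card V) // 0 < μ j}) G.cliqueNum),
      μ i ^ 2
    ≤ 2 * (G.edgeFinset.card : ℝ) * ((G.cliqueNum : ℝ) - 1) / (G.cliqueNum : ℝ) := by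
  have : Nonempty V := Fintype.card_pos_iff.mp (by rw [hsrg.card]; lia)
  have hmud : mu ≤ d := le_degree_of_isSRGWith hsrg hdn
  have hω : G.cliqueNum = 3 := cliqueNum_eq_three_of_isSRGWith hsrg hd0
  have hedges : 2 * (#G.edgeFinset : ℝ) = n * d := by
    exact_mod_cast hsrg.card ▸ two_mul_card_edgeFinset_of_isRegularOfDegree hsrg.regular
  have heigvec (i : Fin (Fintype.card V)) :
      G.adjMatrix ℝ *ᵥ hA.eigenvectorBasis (e.symm i) =
        μ i • ⇑(hA.eigenvectorBasis (e.symm i)) := by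
    simpa [← heig] using hA.mulVec_eigenvectorBasis (e.symm i)
  have hsum := sum_sq_eigenvalues_le_of_isSRGWith hsrg hmu hmu hmud
    (hA.eigenvectorBasis.orthonormal.comp e.symm e.symm.injective) heigvec (k := 2)
    (T := {i | (i : ℕ) < min (Nat.card {j // 0 < μ j}) G.cliqueNum})
    (fun i hi => (lt_apply_of_antitone_of_lt_card hanti
      ((mem_filter.mp hi).2.trans_le (min_le_left _ _))).le)
    (by rw [Fin.card_filter_val_lt, hω]; lia)
  have hparams := three_mul_sq_degree_add_le_of_isSRGWith hsrg hmu
    (add_one_lt_degree_of_isSRGWith hsrg hdn hmu) hmud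
  refine hsum.trans ?_
  rw [hedges, hω, le_div_iff₀ (by norm_num)]
  push_cast
  linarith
end

section
/- For all integers $k \geq 2$ and $p \geq 2k$ (with real-valued arithmetic on binomial coefficients): $\binom{p-k}{k}^2\left(1+\frac{k(k-1)^2}{(p-k-1)^2(p-k)}\right) \leq \binom{p}{k}\binom{p-k}{k}\cdot\frac{p-2k+1}{p-k+1}$. -/
/-!
Put `n = p - k`. The quotient of `n.choose k = n ⋯ (n - k + 1) / k!` by
`(n + k).choose k = (n + k) ⋯ (n + 1) / k!` has the factor
`(n - k + 1) (n - k + 2) / ((n + 1) (n + k))`, and the remaining factors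
`n ⋯ (n - k + 3)` and `(n + k - 1) ⋯ (n + 2)` have a quotient of at most `1`. As
`n - k + 2 ≤ n` for `2 ≤ k`, the inequality holds even with `1 + k / n` in place of the smaller
`1 + k (k - 1)² / ((n - 1)² n)`.
-/

lemma choose_mul_succ_le (n m : ℕ) :
    n.choose m * (n + 1) ≤ (n + m).choose m * (n + 1 - m) := by
  have choose_le : (n + 1).choose m ≤ (n + m).choose m := by
    rcases Nat.eq_zero_or_pos m with rfl | hm
    · simp
    · exact Nat.choose_le_choose m (by omega)
  rw [Nat.choose_mul_succ_eq]
  gcongr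

lemma choose_mul_succ_mul_add_le (n k : ℕ) :
    n.choose k * ((n + 1) * (n + k)) ≤ (n + k).choose k * ((n + 1 - k) * (n + 2 - k)) := by
  rcases k with _ | m
  · simp only [Nat.choose_zero_right, one_mul, add_zero, Nat.sub_zero]
    gcongr
    omega
  have choose_n : n.choose (m + 1) * (m + 1) = n.choose m * (n - m) :=
    Nat.choose_succ_right_eq n m
  have choose_add : (n + m + 1) * (n + m).choose m = (n + m + 1).choose (m + 1) * (m + 1) :=
    Nat.add_one_mul_choose_eq (n + m) m
  rw [← add_assoc, show n + 1 - (m + 1) = n - m by omega,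
    show n + 2 - (m + 1) = n + 1 - m by omega]
  refine Nat.le_of_mul_le_mul_right (c := m + 1) ?_ m.succ_pos
  calc n.choose (m + 1) * ((n + 1) * (n + m + 1)) * (m + 1)
      = n.choose m * (n + 1) * ((n - m) * (n + m + 1)) := by
        linear_combination (n + 1) * (n + m + 1) * choose_n
    _ ≤ (n + m).choose m * (n + 1 - m) * ((n - m) * (n + m + 1)) := by
        gcongr ?_ * _
        exact choose_mul_succ_le n m
    _ = (n + m + 1).choose (m + 1) * ((n - m) * (n + 1 - m)) * (m + 1) := by
        linear_combination (n - m) * (n + 1 - m) * choose_add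

section OrderedField

variable {K : Type*} [Field K] [LinearOrder K] [IsStrictOrderedRing K]

lemma choose_mul_one_add_div_le {n k : ℕ} (hk : 2 ≤ k) (hkn : k ≤ n) :
    (n.choose k : K) * (1 + k / n) ≤ (n + k).choose k * ((n - k + 1) / (n + 1)) := by
  have hn : (0 : K) < n := by exact_mod_cast (by omega : 0 < n)
  have nat_le : n.choose k * ((n + 1) * (n + k)) ≤ (n + k).choose k * ((n - k + 1) * n) := by
    refine (choose_mul_succ_mul_add_le n k).trans ?_
    gcongr <;> omega
  have cast_le :
      (n.choose k : K) * ((n + 1) * (n + k)) ≤ (n + k).choose k * ((n - k + 1) * n) := by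
    rw [← Nat.cast_sub hkn]
    exact_mod_cast nat_le
  rw [one_add_div hn.ne', ← mul_div_assoc, ← mul_div_assoc, div_le_div_iff₀ hn (by positivity)]
  linear_combination cast_le

lemma mul_sub_one_sq_div_le_div {x y : K} (hx : 1 ≤ x) (hxy : x ≤ y) :
    x * (x - 1) ^ 2 / ((y - 1) ^ 2 * y) ≤ x / y := by
  have hx0 : 0 ≤ x := zero_le_one.trans hx
  have hx' : 0 ≤ x - 1 := sub_nonneg.2 hx
  have hxy' : x - 1 ≤ y - 1 := sub_le_sub_right hxy 1
  have ratio_le_one : (x - 1) / (y - 1) ≤ 1 := div_le_one_of_le₀ hxy' (hx'.trans hxy')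
  calc x * (x - 1) ^ 2 / ((y - 1) ^ 2 * y) = x / y * ((x - 1) / (y - 1)) ^ 2 := by
        rw [mul_comm ((y - 1) ^ 2), mul_div_mul_comm, div_pow]
    _ ≤ x / y := mul_le_of_le_one_right (div_nonneg hx0 (hx0.trans hxy))
        (pow_le_one₀ (div_nonneg hx' (hx'.trans hxy')) ratio_le_one)

end OrderedField

/-- The key arithmetic inequality in the proof of the generalised
Bollobás–Nikiforov conjecture for Kneser graphs `KG_{p,k}`:
`C(p-k,k)² (1 + k(k-1)²/((p-k-1)²(p-k))) ≤ C(p,k) C(p-k,k) (p-2k+1)/(p-k+1)`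
for integers `k ≥ 2` and `p ≥ 2k`. -/
theorem kneser_key_inequality (p k : ℕ) (hk : 2 ≤ k) (hp : 2 * k ≤ p) :
    ((p - k).choose k : ℝ) ^ 2 *
      (1 + (k : ℝ) * ((k : ℝ) - 1) ^ 2 / (((p : ℝ) - k - 1) ^ 2 * ((p : ℝ) - k)))
    ≤ (p.choose k : ℝ) * ((p - k).choose k : ℝ) *
      (((p : ℝ) - 2 * k + 1) / ((p : ℝ) - k + 1)) := by
  obtain ⟨n, rfl⟩ : ∃ n, p = n + k := Nat.exists_eq_add_of_le' (by omega)
  have hkn : k ≤ n := by omega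
  have correction_le :
      (k : ℝ) * ((k : ℝ) - 1) ^ 2 / (((n : ℝ) - 1) ^ 2 * n) ≤ k / n :=
    mul_sub_one_sq_div_le_div (by exact_mod_cast (by omega : 1 ≤ k)) (by exact_mod_cast hkn)
  have shift : (n : ℝ) + k - 2 * k + 1 = n - k + 1 := by ring
  rw [Nat.add_sub_cancel, Nat.cast_add, add_sub_cancel_right, shift]
  calc (n.choose k : ℝ) ^ 2 * (1 + (k : ℝ) * ((k : ℝ) - 1) ^ 2 / (((n : ℝ) - 1) ^ 2 * n))
      ≤ (n.choose k : ℝ) ^ 2 * (1 + (k : ℝ) / n) := by gcongr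
    _ = (n.choose k : ℝ) * (n.choose k * (1 + (k : ℝ) / n)) := by ring
    _ ≤ (n.choose k : ℝ) * ((n + k).choose k * (((n : ℝ) - k + 1) / ((n : ℝ) + 1))) := by
        gcongr _ * ?_
        exact choose_mul_one_add_div_le hk hkn
    _ = ((n + k).choose k : ℝ) * n.choose k * (((n : ℝ) - k + 1) / ((n : ℝ) + 1)) := by ring
end

section
/- For all integers $k \geq 2$ and $p \geq 2k$ (with real-valued arithmetic): $\binom{p-k+1}{k}\left(1+\frac{k(k-1)^2}{(p-k-1)^2(p-k)}\right) \leq \binom{p}{k}$. -/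
/-!
Since `k - 1 ≤ p - k - 1`, the correction factor is at most `1 + k / (p - k) = p / (p - k)`.
This is exactly the ratio of `C(p, k)` to `C(p - 1, k)`, and `p - k + 1 ≤ p - 1` because `2 ≤ k`.
-/

section BinomialRatio

variable {K : Type*} [Field K]

theorem cast_choose_succ_eq_mul_one_add_div [CharZero K] {n k : ℕ} (hkn : k ≤ n) :
    ((n + 1).choose k : K) = n.choose k * (1 + k / ((n + 1 : ℕ) - k)) := by
  have hkn' : k < n + 1 := Nat.lt_succ_of_le hkn
  have hne : ((n + 1 : ℕ) : K) - k ≠ 0 := sub_ne_zero.mpr (Nat.cast_injective.ne hkn'.ne')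
  have hrec : (n.choose k : K) * (n + 1 : ℕ) = (n + 1).choose k * ((n + 1 : ℕ) - k) := by
    rw [← Nat.cast_sub hkn'.le]
    exact_mod_cast Nat.choose_mul_succ_eq n k
  rw [one_add_div hne, sub_add_cancel, ← mul_div_assoc, eq_div_iff hne, hrec]

variable [LinearOrder K] [IsStrictOrderedRing K]

theorem cast_choose_mul_one_add_div_le {m n k : ℕ} (hmn : m < n) (hkn : k < n) :
    (m.choose k : K) * (1 + k / (n - k)) ≤ n.choose k := by
  obtain ⟨n, rfl⟩ := Nat.exists_eq_add_one_of_ne_zero (Nat.ne_zero_of_lt hmn)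
  have hpos : (0 : K) < (n + 1 : ℕ) - k := sub_pos.mpr (Nat.cast_lt.mpr hkn)
  have hchoose : (m.choose k : K) ≤ n.choose k :=
    Nat.cast_le.mpr (Nat.choose_le_choose k (Nat.le_of_lt_succ hmn))
  rw [cast_choose_succ_eq_mul_one_add_div (Nat.le_of_lt_succ hkn)]
  exact mul_le_mul_of_nonneg_right hchoose (by positivity)

theorem mul_sq_div_sq_mul_le_div {a b c d : K} (hc : 0 ≤ c) (hd : 0 ≤ d) (hab : |a| ≤ |b|) :
    c * a ^ 2 / (b ^ 2 * d) ≤ c / d :=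
  calc c * a ^ 2 / (b ^ 2 * d) = c / d * (a ^ 2 / b ^ 2) := by
        rw [div_mul_div_comm, mul_comm d]
    _ ≤ c / d := mul_le_of_le_one_right (div_nonneg hc hd)
        (div_le_one_of_le₀ (sq_le_sq.mpr hab) (sq_nonneg b))

end BinomialRatio

/-- Reformulation, after cancelling and rearranging, of the key arithmetic
inequality for Kneser graphs:
`C(p-k+1,k) (1 + k(k-1)²/((p-k-1)²(p-k))) ≤ C(p,k)`
for integers `k ≥ 2` and `p ≥ 2k`. -/
theorem kneser_key_inequality_reformulated (p k : ℕ) (hk : 2 ≤ k) (hp : 2 * k ≤ p) :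
    ((p - k + 1).choose k : ℝ) *
      (1 + (k : ℝ) * ((k : ℝ) - 1) ^ 2 / (((p : ℝ) - k - 1) ^ 2 * ((p : ℝ) - k)))
    ≤ (p.choose k : ℝ) := by
  have hk' : (2 : ℝ) ≤ k := by exact_mod_cast hk
  have hp' : 2 * (k : ℝ) ≤ p := by exact_mod_cast hp
  have habs : |(k : ℝ) - 1| ≤ |(p : ℝ) - k - 1| :=
    abs_le_abs_of_nonneg (by linarith) (by linarith)
  calc ((p - k + 1).choose k : ℝ) *
        (1 + (k : ℝ) * ((k : ℝ) - 1) ^ 2 / (((p : ℝ) - k - 1) ^ 2 * ((p : ℝ) - k)))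
      ≤ (p - k + 1).choose k * (1 + k / (p - k)) := by
        gcongr _ * (1 + ?_)
        exact mul_sq_div_sq_mul_le_div (by linarith) (by linarith) habs
    _ ≤ p.choose k := cast_choose_mul_one_add_div_le (by omega) (by omega)
end

section
/- For all integers $k \geq 3$ and $p \geq 2k$ (with real-valued arithmetic): $\left(\prod_{i=k}^{2k-2}(p-i)\right)\left(1+\frac{k(k-1)^2}{(p-k-1)^2(p-k)}\right) \leq \prod_{i=0}^{k-2}(p-i)$, i.e., $(p-k)(p-k-1)\cdots(p-2k+2)\left(1+\frac{k(k-1)^2}{(p-k-1)^2(p-k)}\right) \leq p(p-1)\cdots(p-k+2)$. -/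
/-!
Put `m = p - k`. Factor by factor, the right-hand product divided by the left-hand one is
`∏ j < k - 1, (m - j + k) / (m - j)`. Each of these ratios is at least `1 + k / m`, so Bernoulli's
inequality bounds the quotient below by `1 + (k - 1) * (k / m)`. The correction term of the theorem
is `((k - 1) / (m - 1)) ^ 2 * (k / m)`, and `((k - 1) / (m - 1)) ^ 2 ≤ 1 ≤ k - 1`.
-/

open Finset

theorem prod_mul_one_add_card_mul_le_prod {ι R : Type*} [CommRing R] [LinearOrder R]
    [IsStrictOrderedRing R] {s : Finset ι} {f g : ι → R} {t : R} (ht : -1 ≤ t)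
    (hf : ∀ i ∈ s, 0 ≤ f i) (hfg : ∀ i ∈ s, f i * (1 + t) ≤ g i) :
    (∏ i ∈ s, f i) * (1 + #s * t) ≤ ∏ i ∈ s, g i := by
  have ht_nonneg : 0 ≤ 1 + t := by linarith
  calc (∏ i ∈ s, f i) * (1 + #s * t)
      ≤ (∏ i ∈ s, f i) * (1 + t) ^ #s :=
        mul_le_mul_of_nonneg_left (one_add_mul_le_pow (by linarith) _) (prod_nonneg hf)
    _ = ∏ i ∈ s, f i * (1 + t) := prod_mul_pow_card
    _ ≤ ∏ i ∈ s, g i := prod_le_prod (fun i hi ↦ mul_nonneg (hf i hi) ht_nonneg) hfg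

theorem prod_Icc_two_mul_sub_two {M : Type*} [CommMonoid M] (f : ℕ → M) {k : ℕ} (hk : 1 ≤ k) :
    ∏ i ∈ Icc k (2 * k - 2), f i = ∏ j ∈ range (k - 1), f (k + j) := by
  have h_interval : Icc k (2 * k - 2) = Ico k (2 * k - 1) := by
    ext i
    simp only [mem_Icc, mem_Ico]
    omega
  rw [h_interval, prod_Ico_eq_prod_range, show 2 * k - 1 - k = k - 1 by omega]

section OrderedField

variable {K : Type*} [Field K] [LinearOrder K] [IsStrictOrderedRing K]

theorem mul_one_add_div_le_add {a m x : K} (hm : 0 < m) (hx : 0 ≤ x) (ham : a ≤ m) :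
    a * (1 + x / m) ≤ a + x :=
  calc a * (1 + x / m) = a + a / m * x := by ring
    _ ≤ a + x := by grw [mul_le_of_le_one_left hx ((div_le_one hm).2 ham)]

theorem prod_range_sub_mul_one_add_le {m x : K} {n : ℕ} (hm : 0 < m) (hx : 0 ≤ x)
    (hn : (n : K) ≤ m + 1) :
    (∏ j ∈ range n, (m - j)) * (1 + n * (x / m)) ≤ ∏ j ∈ range n, (m - j + x) := by
  have h_nonneg : ∀ j ∈ range n, 0 ≤ m - j := fun j hj ↦ by
    have hjn : (j : K) + 1 ≤ n := mod_cast mem_range.1 hj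
    linarith
  have h_factor : ∀ j ∈ range n, (m - j) * (1 + x / m) ≤ m - j + x := fun j _ ↦
    mul_one_add_div_le_add hm hx (sub_le_self m j.cast_nonneg)
  have hxm : -1 ≤ x / m := by linarith [div_nonneg hx hm.le]
  simpa only [card_range] using prod_mul_one_add_card_mul_le_prod hxm h_nonneg h_factor

theorem mul_sq_div_sq_mul_le {a b m x : K} (ha : 1 ≤ a) (hab : a ≤ b) (hm : 0 < m) (hx : 0 ≤ x) :
    x * a ^ 2 / (b ^ 2 * m) ≤ a * (x / m) := by
  have h_sq : (a / b) ^ 2 ≤ 1 :=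
    pow_le_one₀ (by bound) (div_le_one_of_le₀ hab (by linarith))
  calc x * a ^ 2 / (b ^ 2 * m) = (a / b) ^ 2 * (x / m) := by
        rw [div_pow, div_mul_div_comm, mul_comm x]
    _ ≤ a * (x / m) := mul_le_mul_of_nonneg_right (h_sq.trans ha) (div_nonneg hx hm.le)

theorem kneser_product_inequality_general {p : K} {k : ℕ} (hk : 2 ≤ k) (hp : 2 * (k : K) ≤ p) :
    (∏ i ∈ Icc k (2 * k - 2), (p - i)) *
      (1 + (k : K) * ((k : K) - 1) ^ 2 / ((p - k - 1) ^ 2 * (p - k)))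
    ≤ ∏ i ∈ range (k - 1), (p - i) := by
  have hk' : (2 : K) ≤ k := mod_cast hk
  have h_cast : ((k - 1 : ℕ) : K) = k - 1 := Nat.cast_pred (by omega)
  have hm : 0 < p - k := by linarith
  have h_nonneg : 0 ≤ ∏ i ∈ Icc k (2 * k - 2), (p - i) := prod_nonneg fun i hi ↦ by
    have hik : (i : K) ≤ 2 * k := mod_cast (by grind : i ≤ 2 * k)
    linarith
  calc (∏ i ∈ Icc k (2 * k - 2), (p - i)) *
        (1 + (k : K) * ((k : K) - 1) ^ 2 / ((p - k - 1) ^ 2 * (p - k)))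
      ≤ (∏ i ∈ Icc k (2 * k - 2), (p - i)) * (1 + ((k : K) - 1) * (k / (p - k))) := by
        gcongr
        exact mul_sq_div_sq_mul_le (by linarith) (by linarith) hm k.cast_nonneg
    _ = (∏ j ∈ range (k - 1), (p - k - j)) * (1 + (k - 1 : ℕ) * (k / (p - k))) := by
        simp only [prod_Icc_two_mul_sub_two _ (by omega : 1 ≤ k), Nat.cast_add, sub_sub, h_cast]
    _ ≤ ∏ j ∈ range (k - 1), (p - k - j + k) :=
        prod_range_sub_mul_one_add_le hm k.cast_nonneg (by linarith)
    _ = ∏ i ∈ range (k - 1), (p - i) := prod_congr rfl fun j _ ↦ by ring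

end OrderedField

/-- The product form of the key arithmetic inequality for Kneser graphs:
`(p-k)(p-k-1)⋯(p-2k+2) (1 + k(k-1)²/((p-k-1)²(p-k))) ≤ p(p-1)⋯(p-k+2)`
for integers `k ≥ 3` and `p ≥ 2k`. Both products have `k - 1` consecutive factors. -/
theorem kneser_product_inequality (p k : ℕ) (hk : 3 ≤ k) (hp : 2 * k ≤ p) :
    (∏ i ∈ Finset.Icc k (2 * k - 2), ((p : ℝ) - i)) *
      (1 + (k : ℝ) * ((k : ℝ) - 1) ^ 2 / (((p : ℝ) - k - 1) ^ 2 * ((p : ℝ) - k)))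
    ≤ ∏ i ∈ Finset.range (k - 1), ((p : ℝ) - i) :=
  kneser_product_inequality_general (by omega) (mod_cast hp)
end

section
/- For all integers $k \geq 2$ and $p \geq 2k$ (with real-valued arithmetic): $(k(p-k))^2 + (p-k)\left((k-1)p-k^2\right)^2 \leq \frac{p-k}{p-k+1}\cdot k(p-k)\binom{p}{k}$. -/
/-!
Put `q = p - k`. Since `(k-1)p - k² = (k-1)q - k` and `k C(k+q,k) = (q+1) C(k+q,q+1)`, a factor `q`
cancels and the claim becomes `k²q + ((k-1)q - k)² ≤ q C(k+q,q+1)`. The left side has degree 4 in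
`(k, q)`, so for `k ≥ 4` the cubic lower bound `C(k+q,3) ≤ C(k+q,q+1)` suffices; for `k = 2, 3` the
binomial coefficient is `C(q+2,1)` or `C(q+3,2)`.
-/

section Choose

theorem choose_le_choose_of_le_half {n r s : ℕ} (hrs : r ≤ s) (hs : s ≤ n / 2) :
    n.choose r ≤ n.choose s := by
  induction s, hrs using Nat.le_induction with
  | base => exact le_rfl
  | succ t _ ih => exact (ih (by lia)).trans (Nat.choose_le_succ_of_lt_half_left (by lia))

theorem choose_le_choose_of_le_of_add_le {n r s : ℕ} (hrs : r ≤ s) (hsr : s + r ≤ n) :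
    n.choose r ≤ n.choose s := by
  rcases le_or_gt s (n / 2) with hs | hs
  · exact choose_le_choose_of_le_half hrs hs
  · rw [← Nat.choose_symm (show s ≤ n by lia)]
    exact choose_le_choose_of_le_half (by lia) (by lia)

theorem cast_choose_three (K : Type*) [DivisionRing K] [CharZero K] (n : ℕ) :
    (n.choose 3 : K) = n * (n - 1) * (n - 2) / 6 := by
  rw [Nat.cast_choose_eq_descPochhammer_div]
  norm_num [descPochhammer_succ_eval, Nat.factorial]

theorem mul_choose_add_left (k q : ℕ) :
    k * (k + q).choose k = (q + 1) * (k + q).choose (q + 1) :=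
  calc k * (k + q).choose k = (k + q).choose q * (k + q - q) := by
        rw [Nat.choose_symm_add, Nat.add_sub_cancel, mul_comm]
    _ = (q + 1) * (k + q).choose (q + 1) := by
        rw [← Nat.choose_succ_right_eq, mul_comm]

end Choose

/-- The quotient `(μ₁² + (ω - 1) μ₂²) / q` for the Johnson graph `J(k+q,k)`, whose two largest
eigenvalues are `μ₁ = kq` and `μ₂ = (k-1)q - k`, with `ω = q + 1` (the clique number when `k ≤ q`).
It is a polynomial, so the parameters are taken in any ring. -/
def johnsonSpectralSum {R : Type*} [Ring R] (k q : R) : R :=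
  k ^ 2 * q + ((k - 1) * q - k) ^ 2

section Polynomial

variable {R : Type*} [CommRing R] [LinearOrder R] [IsStrictOrderedRing R] {k q : R}

theorem johnsonSpectralSum_two_le (hq : 2 ≤ q) : johnsonSpectralSum 2 q ≤ q * (q + 2) := by
  unfold johnsonSpectralSum
  linarith

theorem two_mul_johnsonSpectralSum_three_le (hq : 2 ≤ q) :
    2 * johnsonSpectralSum 3 q ≤ q * ((q + 3) * (q + 2)) := by
  obtain ⟨y, hy, rfl⟩ := exists_nonneg_add_of_le hq
  rw [johnsonSpectralSum, ← sub_nonneg]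
  calc 0 ≤ y ^ 3 + 3 * y ^ 2 + 12 * y + 2 := by positivity
    _ = _ := by ring

theorem six_mul_johnsonSpectralSum_le (hk : 4 ≤ k) (hq : 2 ≤ q) :
    6 * johnsonSpectralSum k q ≤ q * ((k + q) * (k + q - 1) * (k + q - 2)) := by
  obtain ⟨x, hx, rfl⟩ := exists_nonneg_add_of_le hk
  obtain ⟨y, hy, rfl⟩ := exists_nonneg_add_of_le hq
  -- `-3x²y²` is the only negative monomial of the difference; `xy³` and `x³y` absorb it.
  have quadratic_nonneg : 0 ≤ x ^ 2 - 3 * x * y + 3 * y ^ 2 := by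
    linarith [sq_nonneg (2 * x - 3 * y), sq_nonneg y]
  rw [johnsonSpectralSum, ← sub_nonneg]
  calc 0 ≤ x * y * (x ^ 2 - 3 * x * y + 3 * y ^ 2) + (2 * x ^ 3 + 3 * x ^ 2 * y + 12 * x ^ 2
          + 26 * x * y + 28 * x + y ^ 4 + 17 * y ^ 3 + 50 * y ^ 2 + 100 * y + 24) := by positivity
    _ = _ := by ring

end Polynomial

theorem johnsonSpectralSum_le_mul_choose {k q : ℕ} (hk : 2 ≤ k) (hq : 2 ≤ q) :
    johnsonSpectralSum (k : ℝ) q ≤ q * (k + q).choose (q + 1) := by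
  have hq' : (2 : ℝ) ≤ q := mod_cast hq
  obtain rfl | rfl | hk4 : k = 2 ∨ k = 3 ∨ 4 ≤ k := by lia
  · have choose_eq : (2 + q).choose (q + 1) = q + 2 := by
      rw [Nat.choose_symm_of_eq_add (show 2 + q = (q + 1) + 1 by lia), Nat.choose_one_right,
        add_comm]
    rw [choose_eq]
    exact_mod_cast johnsonSpectralSum_two_le hq'
  · have choose_eq : ((3 + q).choose (q + 1) : ℝ) = (q + 3) * (q + 2) / 2 := by
      rw [Nat.choose_symm_of_eq_add (show 3 + q = (q + 1) + 2 by lia), Nat.cast_choose_two]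
      push_cast
      ring
    rw [choose_eq]
    push_cast
    linarith [two_mul_johnsonSpectralSum_three_le hq']
  · have choose_ge : ((k + q).choose 3 : ℝ) ≤ (k + q).choose (q + 1) :=
      mod_cast choose_le_choose_of_le_of_add_le (by lia) (by lia)
    calc johnsonSpectralSum (k : ℝ) q
        ≤ q * ((k + q) * (k + q - 1) * (k + q - 2) / 6) := by
          linarith [six_mul_johnsonSpectralSum_le (mod_cast hk4 : (4 : ℝ) ≤ k) hq']
      _ = q * (k + q).choose 3 := by rw [cast_choose_three]; push_cast; rfl
      _ ≤ q * (k + q).choose (q + 1) := by gcongr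

theorem johnson_key_inequality_general (p k : ℕ) (hk : 2 ≤ k) (hp : k + 2 ≤ p) :
    ((k : ℝ) * ((p : ℝ) - k)) ^ 2
      + ((p : ℝ) - k) * (((k : ℝ) - 1) * (p : ℝ) - (k : ℝ) ^ 2) ^ 2
    ≤ (((p : ℝ) - k) / ((p : ℝ) - k + 1)) * ((k : ℝ) * ((p : ℝ) - k) * (p.choose k : ℝ)) := by
  obtain ⟨q, rfl⟩ := Nat.exists_eq_add_of_le (show k ≤ p by lia)
  have hpk : ((k + q : ℕ) : ℝ) - k = q := by push_cast; ring
  have choose_eq : (k : ℝ) * (k + q).choose k = (q + 1) * (k + q).choose (q + 1) :=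
    mod_cast mul_choose_add_left k q
  rw [hpk]
  calc ((k : ℝ) * q) ^ 2 + q * ((k - 1) * (k + q : ℕ) - k ^ 2) ^ 2
      = q * johnsonSpectralSum (k : ℝ) q := by rw [johnsonSpectralSum]; push_cast; ring
    _ ≤ q * (q * (k + q).choose (q + 1)) := by
        gcongr
        exact johnsonSpectralSum_le_mul_choose hk (by lia)
    _ = q / (q + 1) * (q * ((q + 1) * (k + q).choose (q + 1))) := by field_simp
    _ = q / (q + 1) * (k * q * (k + q).choose k) := by rw [← choose_eq]; ring

/-- The key arithmetic inequality in the proof of the generalised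
Bollobás–Nikiforov conjecture for Johnson graphs `J(p,k)`:
`(k(p-k))² + (p-k)((k-1)p - k²)² ≤ ((p-k)/(p-k+1)) k (p-k) C(p,k)`
for integers `k ≥ 2` and `p ≥ 2k`. -/
theorem johnson_key_inequality (p k : ℕ) (hk : 2 ≤ k) (hp : 2 * k ≤ p) :
    ((k : ℝ) * ((p : ℝ) - k)) ^ 2
      + ((p : ℝ) - k) * (((k : ℝ) - 1) * (p : ℝ) - (k : ℝ) ^ 2) ^ 2
    ≤ (((p : ℝ) - k) / ((p : ℝ) - k + 1)) * ((k : ℝ) * ((p : ℝ) - k) * (p.choose k : ℝ)) :=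
  johnson_key_inequality_general p k hk (by lia)
end

section
/- Let $n, d, \mu, r, s$ be real numbers satisfying $d \geq 8$, $\mu \geq 1$, $r > 0 > s$, $r + s = 1 - \mu$, $rs = \mu - d$, and $(d-r)(d-s) = n(d + rs)$ with $d + rs > 0$. Then $d^2 + 2r^2 \leq \frac{2nd}{3}$. -/
/-!
The eigenvalue identities amount to the counting identity `d (d - λ - 1) = (n - d - 1) μ` together
with `r² = (λ - μ) r + (d - μ)`. For `λ = 1 ≤ μ` the latter gives `r² ≤ d - μ`, and eliminating `n`
reduces the bound to a polynomial inequality in `d` and `μ`, which holds because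
`2d (d (d - 2) + (d + 1) μ) - 3μ (d² + 2 (d - μ)) = d (d - 4) (2d - μ) + 2μ² + 4 (d - μ)²`.
-/

theorem srg_param_eq_of_eigenvalues {R : Type*} [CommRing R] {n d ℓ μ r s : R}
    (hsum : r + s = ℓ - μ) (hprod : r * s = μ - d)
    (heq : (d - r) * (d - s) = n * (d + r * s)) :
    d * (d - ℓ - 1) = (n - d - 1) * μ := by
  linear_combination heq + d * hsum + (n - 1) * hprod

section OrderedRing

variable {R : Type*} [CommRing R] [LinearOrder R] [IsStrictOrderedRing R]

theorem sq_le_neg_mul_of_add_nonpos {r s : R} (hr : 0 ≤ r) (hsum : r + s ≤ 0) :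
    r ^ 2 ≤ -(r * s) := by
  linear_combination mul_nonpos_of_nonneg_of_nonpos hr hsum

theorem three_mul_sq_add_le_of_param_eq {n d μ : R} (hd : 4 ≤ d) (hμ : 0 < μ) (hμd : μ ≤ 2 * d)
    (hparam : d * (d - 1 - 1) = (n - d - 1) * μ) :
    3 * (d ^ 2 + 2 * (d - μ)) ≤ 2 * n * d := by
  have : 0 ≤ d := zero_le_four.trans hd
  have : 0 ≤ d - 4 := sub_nonneg.2 hd
  have : 0 ≤ 2 * d - μ := sub_nonneg.2 hμd
  refine le_of_mul_le_mul_left (sub_nonneg.1 ?_) hμ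
  calc
    0 ≤ d * (d - 4) * (2 * d - μ) + 2 * μ ^ 2 + 4 * (d - μ) ^ 2 := by positivity
    _ = μ * (2 * n * d) - μ * (3 * (d ^ 2 + 2 * (d - μ))) := by
      linear_combination 2 * d * hparam

end OrderedRing

/- The threshold `4 ≤ d` covers every strongly regular graph with `λ = 1 ≤ μ`: neighbourhoods
induce perfect matchings, so `d` is even, and `d = 2` would force a triangle, a complete graph. -/
theorem srg_lambda_one_core_general {K : Type*} [Field K] [LinearOrder K] [IsStrictOrderedRing K]
    {n d μ r s : K} (hd : 4 ≤ d) (hμ : 1 ≤ μ) (hr : 0 ≤ r)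
    (hsum : r + s = 1 - μ) (hprod : r * s = μ - d)
    (heq : (d - r) * (d - s) = n * (d + r * s)) :
    d ^ 2 + 2 * r ^ 2 ≤ 2 * n * d / 3 := by
  have hsq : r ^ 2 ≤ d - μ := by
    simpa only [hprod, neg_sub] using
      sq_le_neg_mul_of_add_nonpos hr (hsum.trans_le (sub_nonpos.2 hμ))
  have hμd : μ ≤ d := sub_nonneg.1 ((sq_nonneg r).trans hsq)
  have hbound : 3 * (d ^ 2 + 2 * (d - μ)) ≤ 2 * n * d :=
    three_mul_sq_add_le_of_param_eq hd (by linarith) (by linarith)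
      (srg_param_eq_of_eigenvalues hsum hprod heq)
  linarith

/-- The reduction of the generalised Bollobás–Nikiforov conjecture for strongly
regular graphs with `λ = 1`. The hypotheses encode the standard identities for
the parameters and restricted eigenvalues `r > s` of an `SRG(n,d,1,μ)`; the
conclusion is `d² + 2r² ≤ 2nd/3`. -/
theorem srg_lambda_one_core (n d mu r s : ℝ)
    (hd : 8 ≤ d) (hmu : 1 ≤ mu)
    (hr : 0 < r) (hs : s < 0)
    (hrs : r + s = 1 - mu) (hprod : r * s = mu - d)
    (heq : (d - r) * (d - s) = n * (d + r * s)) (hpos : 0 < d + r * s) :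
    d ^ 2 + 2 * r ^ 2 ≤ 2 * n * d / 3 :=
  srg_lambda_one_core_general (by linarith) hmu hr.le hrs hprod heq
end
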